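/- Let k be a field of characteristic different from 2 and 3 and let t ∈ k with t³ ≠ 1. Then the Weierstrass curve y² = x³ − 3·t·(t³ − 1)·x − 2·(t³ − 1)² is nonsingular and its j-invariant equals 1728·t³. -/

import Mathlib

/-! With `s = t ^ 3 - 1`, the curve has `Δ = 1728 * s ^ 3` and `c₄ = 144 * t * s`. Since
`1728 = 2 ^ 6 * 3 ^ 3`, the discriminant is nonzero, and `c₄ ^ 3 = 1728 * t ^ 3 * Δ` gives `j`. -/

theorem stmt_8 (k : Type*) [Field k] (h2 : (2 : k) ≠ 0) (h3 : (3 : k) ≠ 0)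
    (t : k) (ht : t ^ 3 ≠ 1)
    (E2 : WeierstrassCurve k)
    (hE2 : E2 = ⟨0, 0, 0, -(3 * t * (t ^ 3 - 1)), -(2 * (t ^ 3 - 1) ^ 2)⟩) :
    ∃ h : E2.IsElliptic, @WeierstrassCurve.j k _ E2 h = 1728 * t ^ 3 := by
  have hΔ : E2.Δ = 2 ^ 6 * 3 ^ 3 * (t ^ 3 - 1) ^ 3 := by
    subst hE2
    simp only [WeierstrassCurve.Δ, WeierstrassCurve.b₂, WeierstrassCurve.b₄,
      WeierstrassCurve.b₆, WeierstrassCurve.b₈]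
    ring
  have hc₄ : E2.c₄ = 144 * t * (t ^ 3 - 1) := by
    subst hE2
    simp only [WeierstrassCurve.c₄, WeierstrassCurve.b₂, WeierstrassCurve.b₄]
    ring
  have hΔ_ne : E2.Δ ≠ 0 := by
    rw [hΔ]
    exact mul_ne_zero (mul_ne_zero (pow_ne_zero _ h2) (pow_ne_zero _ h3))
      (pow_ne_zero _ (sub_ne_zero.mpr ht))
  have hE : E2.IsElliptic := ⟨hΔ_ne.isUnit⟩
  refine ⟨hE, ?_⟩
  rw [WeierstrassCurve.j, Units.inv_mul_eq_iff_eq_mul, WeierstrassCurve.coe_Δ', hΔ, hc₄]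
  ring
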